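/- Stirling-type asymptotics for the double gamma function: as x → +∞ (x real), ln G(x+1) − ( (x/2)·ln(2π) + (x²/2 − 1/12)·ln x − (3/4)x² ) tends to the constant ln( π^{1/6} · G(1/2)^{2/3} / 2^{1/36} ). -/

import Mathlib

open Real

/-- The double gamma function, defined by its Weierstrass product. -/
noncomputable def doubleGamma (x : ℝ) : ℝ :=
  (2 * π) ^ ((x - 1) / 2) *
    Real.exp (-(x - 1) * x / 2 - Real.eulerMascheroniConstant * (x - 1) ^ 2 / 2) *
    ∏' n : ℕ,
      ((1 + (x - 1) / (n + 1)) ^ (n + 1) *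
        Real.exp (-(x - 1) + (x - 1) ^ 2 / (2 * (n + 1))))

open Filter Topology

/-!
Taking logarithms in the Weierstrass product turns its partial products into the sums
`∑ (n + 1) log (x + n + 1)`, up to hyperfactorials and harmonic numbers. Euler–Maclaurin gives
explicit approximate antidifferences of `y log y` and `log y`, with errors `O(1 / y ^ 2)` and
`O(1 / y ^ 3)`; telescoping, the sums are known up to `O(1 / x)` uniformly in their length, and
letting the length tend to infinity gives the expansion of `log G(x + 1)` with constant term
`1 / 12 - log A`, where `A` is the Glaisher–Kinkelin constant. At `x = -1 / 2` the sums are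
combinations of hyperfactorials and factorials, so `log G(1 / 2)` is an affine function of `log A`,
and `log A` can be eliminated.
-/

/-! ### Estimates for the logarithm -/

lemma abs_sum_add_log_one_sub_le {u : ℝ} (hu : |u| ≤ 1 / 2) (n : ℕ) :
    |(∑ i ∈ Finset.range n, u ^ (i + 1) / (i + 1)) + log (1 - u)| ≤ 2 * |u| ^ (n + 1) := by
  refine (abs_log_sub_add_sum_range_le (by linarith) n).trans ?_
  rw [div_le_iff₀ (by linarith)]
  nlinarith [pow_nonneg (abs_nonneg u) (n + 1)]

lemma abs_mul_log_one_add_div_sub_le {x y : ℝ} (hy : 0 < y) (hxy : 2 * |x| ≤ y) :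
    |y * log (1 + x / y) - x + x ^ 2 / (2 * y)| ≤ 2 * |x| ^ 3 / y ^ 2 := by
  have habs : |-(x / y)| = |x| / y := by rw [abs_neg, abs_div, abs_of_pos hy]
  have hlog : |log (1 + x / y) - x / y + (x / y) ^ 2 / 2| ≤ 2 * (|x| / y) ^ 3 := by
    have h := abs_sum_add_log_one_sub_le (u := -(x / y))
      (by rw [habs, div_le_iff₀ hy]; linarith) 2
    rw [habs] at h
    refine (congrArg _ ?_).trans_le h
    simp only [Finset.sum_range_succ, Finset.sum_range_zero, sub_neg_eq_add]
    push_cast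
    ring
  calc |y * log (1 + x / y) - x + x ^ 2 / (2 * y)|
      = |y * (log (1 + x / y) - x / y + (x / y) ^ 2 / 2)| := by
        congr 1
        field_simp
    _ = y * |log (1 + x / y) - x / y + (x / y) ^ 2 / 2| := by rw [abs_mul, abs_of_pos hy]
    _ ≤ y * (2 * (|x| / y) ^ 3) := by gcongr
    _ = 2 * |x| ^ 3 / y ^ 2 := by field_simp

lemma abs_log_sub_log_sub_one_sub_le {y : ℝ} (hy : 2 ≤ y) :
    |log y - log (y - 1) - (1 / y + 1 / (2 * y ^ 2) + 1 / (3 * y ^ 3))| ≤ 2 / y ^ 4 := by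
  have hy0 : 0 < y := by linarith
  have habs : |1 / y| = 1 / y := abs_of_pos (by positivity)
  have h := abs_sum_add_log_one_sub_le (u := 1 / y)
    (by rw [habs]; exact one_div_le_one_div_of_le two_pos hy) 3
  have hlog : log (1 - 1 / y) = log (y - 1) - log y := by
    rw [one_sub_div hy0.ne', log_div (by linarith) hy0.ne']
  rw [habs, hlog, ← abs_neg] at h
  refine (congrArg _ ?_).trans_le (h.trans_eq (by ring))
  simp only [Finset.sum_range_succ, Finset.sum_range_zero]
  push_cast
  ring

lemma log_one_add_div {x y : ℝ} (hy : 0 < y) (hxy : 0 < x + y) :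
    log (1 + x / y) = log (x + y) - log y := by
  rw [one_add_div hy.ne', add_comm y, log_div hxy.ne' hy.ne']

lemma tendsto_log_one_add_div_atTop (x : ℝ) :
    Tendsto (fun y : ℝ => log (1 + x / y)) atTop (𝓝 0) := by
  have h : Tendsto (fun y : ℝ => 1 + x / y) atTop (𝓝 1) := by
    simpa using (tendsto_id.const_div_atTop x).const_add 1
  simpa using h.log one_ne_zero

lemma tendsto_sq_mul_log_one_add_div_sub_atTop (x : ℝ) :
    Tendsto (fun y : ℝ => y ^ 2 * log (1 + x / y) - x * y) atTop (𝓝 (-(x ^ 2 / 2))) := by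
  rw [tendsto_iff_norm_sub_tendsto_zero]
  refine squeeze_zero' (Eventually.of_forall fun _ => norm_nonneg _) ?_
    (tendsto_id.const_div_atTop (2 * |x| ^ 3))
  filter_upwards [eventually_gt_atTop 0, eventually_ge_atTop (2 * |x|)] with y hy hxy
  calc ‖y ^ 2 * log (1 + x / y) - x * y - -(x ^ 2 / 2)‖
      = |y * (y * log (1 + x / y) - x + x ^ 2 / (2 * y))| := by
        rw [norm_eq_abs]
        congr 1
        field_simp
        ring
    _ = y * |y * log (1 + x / y) - x + x ^ 2 / (2 * y)| := by rw [abs_mul, abs_of_pos hy]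
    _ ≤ y * (2 * |x| ^ 3 / y ^ 2) := by gcongr; exact abs_mul_log_one_add_div_sub_le hy hxy
    _ = 2 * |x| ^ 3 / y := by field_simp

/-! ### Sums and approximate antidifferences -/

lemma hasSum_one_div_sub_one_div_succ {x : ℝ} (hx : 0 < x) :
    HasSum (fun n : ℕ => 1 / (x + n) - 1 / (x + n + 1)) (1 / x) := by
  rw [hasSum_iff_tendsto_nat_of_nonneg fun n => sub_nonneg.2 <|
    one_div_le_one_div_of_le (by positivity) (by linarith)]
  have hsum (N : ℕ) : ∑ n ∈ Finset.range N, (1 / (x + n) - 1 / (x + n + 1)) =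
      1 / x - 1 / (x + N) := by
    simpa [add_assoc] using Finset.sum_range_sub' (fun n : ℕ => 1 / (x + n)) N
  simp only [hsum]
  simpa using (tendsto_atTop_add_const_left _ x tendsto_natCast_atTop_atTop).const_div_atTop (1 : ℝ)
    |>.const_sub (1 / x)

lemma exists_tendsto_sum_sub_antidifference {F f : ℝ → ℝ} {C x : ℝ} (hx : 0 < x)
    (h : ∀ y, x + 1 ≤ y → |F y - F (y - 1) - f y| ≤ C / y ^ 2) :
    ∃ L, |L| ≤ C / x ∧
      Tendsto (fun N : ℕ => ∑ n ∈ Finset.range N, f (x + n + 1) - F (x + N)) atTop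
        (𝓝 (L - F x)) := by
  have hC : 0 ≤ C := by
    have h₁ := (abs_nonneg _).trans (h (x + 1) le_rfl)
    rwa [le_div_iff₀ (by positivity), zero_mul] at h₁
  set e : ℕ → ℝ := fun n => f (x + n + 1) - (F (x + n + 1) - F (x + n)) with he
  have hbound (n : ℕ) : ‖e n‖ ≤ C * (1 / (x + n) - 1 / (x + n + 1)) := by
    have hn := h (x + n + 1) (by linarith [n.cast_nonneg (α := ℝ)])
    rw [add_sub_cancel_right] at hn
    have : 0 < x + n := by positivity
    calc ‖e n‖ ≤ C / (x + n + 1) ^ 2 := by rwa [norm_eq_abs, he, abs_sub_comm]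
      _ ≤ C / ((x + n) * (x + n + 1)) := by gcongr; nlinarith
      _ = C * (1 / (x + n) - 1 / (x + n + 1)) := by field_simp; ring
  have hsum : HasSum (fun n : ℕ => C * (1 / (x + n) - 1 / (x + n + 1))) (C / x) := by
    simpa [div_eq_mul_inv] using (hasSum_one_div_sub_one_div_succ hx).mul_left C
  refine ⟨∑' n, e n, tsum_of_norm_bounded hsum hbound, ?_⟩
  refine (((Summable.of_norm_bounded hsum.summable hbound).hasSum.tendsto_sum_nat).sub_const
    (F x)).congr fun N => ?_
  have htel : ∑ n ∈ Finset.range N, (F (x + n + 1) - F (x + n)) = F (x + N) - F x := by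
    simpa [add_assoc] using Finset.sum_range_sub (fun n : ℕ => F (x + n)) N
  rw [he, Finset.sum_sub_distrib, htel]
  ring

/-- The Stirling approximation of `log Γ(y + 1)`, without its constant term, as an approximate
antidifference of `log`. The term `1 / (12 * y)` is kept because the error is later multiplied
by a quantity of the size of `y`. -/
noncomputable def logFactorialApprox (y : ℝ) : ℝ :=
  (y + 1 / 2) * log y - y + 1 / (12 * y)

/-- The Euler–Maclaurin approximation of the logarithm of the hyperfactorial, without its constant
term, as an approximate antidifference of `y * log y`. -/
noncomputable def logHyperfactorialApprox (y : ℝ) : ℝ :=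
  (y ^ 2 / 2 + y / 2 + 1 / 12) * log y - y ^ 2 / 4

lemma abs_logFactorialApprox_sub_sub_le {y : ℝ} (hy : 2 ≤ y) :
    |logFactorialApprox y - logFactorialApprox (y - 1) - log y| ≤ 3 / y ^ 3 := by
  have hy1 : 0 < y - 1 := by linarith
  have hy0 : 0 < y := by linarith
  obtain ⟨ε, hε⟩ : ∃ ε, ε = log y - log (y - 1) - (1 / y + 1 / (2 * y ^ 2) + 1 / (3 * y ^ 3)) :=
    ⟨_, rfl⟩
  have hεle : |ε| ≤ 2 / y ^ 4 := hε ▸ abs_log_sub_log_sub_one_sub_le hy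
  have hexpand : logFactorialApprox y - logFactorialApprox (y - 1) - log y =
      (y - 1 / 2) * ε + (-(1 / 6) - y / (12 * (y - 1))) / y ^ 3 := by
    unfold logFactorialApprox
    rw [hε]
    field_simp
    ring
  have hmain : |(y - 1 / 2) * ε| ≤ 2 / y ^ 3 := by
    calc |(y - 1 / 2) * ε| ≤ y * (2 / y ^ 4) := by
          rw [abs_mul, abs_of_pos (by linarith)]
          gcongr
          linarith
      _ = 2 / y ^ 3 := by field_simp
  have hrest : |(-(1 / 6) - y / (12 * (y - 1))) / y ^ 3| ≤ 1 / y ^ 3 := by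
    have hle : y / (12 * (y - 1)) ≤ 1 / 6 := by
      rw [div_le_iff₀ (by linarith)]
      linarith
    have hpos : 0 < y / (12 * (y - 1)) := by positivity
    rw [abs_div, abs_of_pos (pow_pos hy0 3)]
    gcongr
    rw [abs_le]
    constructor <;> linarith
  calc |logFactorialApprox y - logFactorialApprox (y - 1) - log y|
      ≤ 2 / y ^ 3 + 1 / y ^ 3 := hexpand ▸ (abs_add_le _ _).trans (add_le_add hmain hrest)
    _ = 3 / y ^ 3 := by ring

lemma abs_logHyperfactorialApprox_sub_sub_le {y : ℝ} (hy : 2 ≤ y) :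
    |logHyperfactorialApprox y - logHyperfactorialApprox (y - 1) - y * log y| ≤ 2 / y ^ 2 := by
  have hy0 : 0 < y := by linarith
  obtain ⟨ε, hε⟩ : ∃ ε, ε = log y - log (y - 1) - (1 / y + 1 / (2 * y ^ 2) + 1 / (3 * y ^ 3)) :=
    ⟨_, rfl⟩
  have hεle : |ε| ≤ 2 / y ^ 4 := hε ▸ abs_log_sub_log_sub_one_sub_le hy
  have hexpand : logHyperfactorialApprox y - logHyperfactorialApprox (y - 1) - y * log y =
      (y ^ 2 / 2 - y / 2 + 1 / 12) * ε + (-(1 / 8) + 1 / (36 * y)) / y ^ 2 := by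
    unfold logHyperfactorialApprox
    rw [hε]
    field_simp
    ring
  have hmain : |(y ^ 2 / 2 - y / 2 + 1 / 12) * ε| ≤ 1 / y ^ 2 := by
    calc |(y ^ 2 / 2 - y / 2 + 1 / 12) * ε| ≤ y ^ 2 / 2 * (2 / y ^ 4) := by
          rw [abs_mul, abs_of_pos (by nlinarith)]
          gcongr
          linarith
      _ = 1 / y ^ 2 := by field_simp
  have hrest : |(-(1 / 8) + 1 / (36 * y)) / y ^ 2| ≤ 1 / y ^ 2 := by
    have hle : 1 / (36 * y) ≤ 1 / 72 := one_div_le_one_div_of_le (by norm_num) (by linarith)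
    have hpos : 0 < 1 / (36 * y) := by positivity
    rw [abs_div, abs_of_pos (pow_pos hy0 2)]
    gcongr
    rw [abs_le]
    constructor <;> linarith
  calc |logHyperfactorialApprox y - logHyperfactorialApprox (y - 1) - y * log y|
      ≤ 1 / y ^ 2 + 1 / y ^ 2 := hexpand ▸ (abs_add_le _ _).trans (add_le_add hmain hrest)
    _ = 2 / y ^ 2 := by ring

lemma exists_tendsto_sum_mul_log_add {x : ℝ} (hx : 1 ≤ x) :
    ∃ L, |L| ≤ 5 / x ∧
      Tendsto (fun N : ℕ => ∑ n ∈ Finset.range N, ((n : ℝ) + 1) * log (x + n + 1) -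
          (logHyperfactorialApprox (x + N) - x * logFactorialApprox (x + N))) atTop
        (𝓝 (L - (logHyperfactorialApprox x - x * logFactorialApprox x))) := by
  have herror (y : ℝ) (hy : x + 1 ≤ y) :
      |(logHyperfactorialApprox y - x * logFactorialApprox y) -
          (logHyperfactorialApprox (y - 1) - x * logFactorialApprox (y - 1)) -
          (y - x) * log y| ≤ 5 / y ^ 2 := by
    have hy2 : 2 ≤ y := by linarith
    have hxy : |x * (logFactorialApprox y - logFactorialApprox (y - 1) - log y)| ≤ 3 / y ^ 2 :=
      calc _ ≤ y * (3 / y ^ 3) := by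
            rw [abs_mul, abs_of_pos (by linarith)]
            gcongr
            · linarith
            · exact abs_logFactorialApprox_sub_sub_le hy2
        _ = 3 / y ^ 2 := by field_simp
    calc _ = |(logHyperfactorialApprox y - logHyperfactorialApprox (y - 1) - y * log y) -
            x * (logFactorialApprox y - logFactorialApprox (y - 1) - log y)| := by ring_nf
      _ ≤ 2 / y ^ 2 + 3 / y ^ 2 := (abs_sub _ _).trans
          (add_le_add (abs_logHyperfactorialApprox_sub_sub_le hy2) hxy)
      _ = 5 / y ^ 2 := by ring
  simpa only [add_assoc, add_sub_cancel_left] using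
    exists_tendsto_sum_sub_antidifference
      (F := fun y => logHyperfactorialApprox y - x * logFactorialApprox y)
      (f := fun y => (y - x) * log y) (by linarith) herror

lemma tendsto_logHyperfactorialApprox_shift (x : ℝ) :
    Tendsto (fun y : ℝ => logHyperfactorialApprox (x + y) - x * logFactorialApprox (x + y) -
        logHyperfactorialApprox y - x * y + x ^ 2 / 2 * log y) atTop
      (𝓝 (x ^ 2 / 2 + x / 2)) := by
  have hsq := (tendsto_sq_mul_log_one_add_div_sub_atTop x).const_mul (1 / 2)
  have hlin := (tendsto_mul_log_one_add_div_atTop x).const_mul (1 / 2)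
  have hconst := (tendsto_log_one_add_div_atTop x).const_mul (1 / 12 - x ^ 2 / 2)
  have hinv := (tendsto_atTop_add_const_left _ x tendsto_id).const_div_atTop (x / 12)
  have hlim := ((hsq.add hlin).add hconst).sub hinv |>.add_const (3 / 4 * x ^ 2)
  refine (hlim.congr' ?_).trans_eq (by ring_nf)
  filter_upwards [eventually_gt_atTop 0, eventually_gt_atTop (-x)] with y hy hxy
  have hxy : 0 < x + y := by linarith
  simp only [log_one_add_div hy hxy, id, logHyperfactorialApprox, logFactorialApprox]
  field_simp
  ring

/-! ### Hyperfactorials -/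

/-- The logarithm of the hyperfactorial `1 ^ 1 * 2 ^ 2 * ⋯ * N ^ N`. -/
noncomputable def logHyperfactorial (N : ℕ) : ℝ :=
  ∑ n ∈ Finset.range N, ((n : ℝ) + 1) * log (n + 1)

lemma logHyperfactorial_succ (N : ℕ) :
    logHyperfactorial (N + 1) = logHyperfactorial N + ((N : ℝ) + 1) * log (N + 1) :=
  Finset.sum_range_succ _ _

/-- The logarithm of the Glaisher–Kinkelin constant, the constant term in the asymptotic expansion
of `logHyperfactorial`. -/
noncomputable def logGlaisher : ℝ :=
  limUnder atTop fun N : ℕ => logHyperfactorial N - logHyperfactorialApprox N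

lemma tendsto_logHyperfactorial_sub :
    Tendsto (fun N : ℕ => logHyperfactorial N - logHyperfactorialApprox N) atTop
      (𝓝 logGlaisher) := by
  apply tendsto_nhds_limUnder
  obtain ⟨L, -, hL⟩ := exists_tendsto_sum_sub_antidifference (F := logHyperfactorialApprox)
    (f := fun y => y * log y) one_pos
    fun y hy => abs_logHyperfactorialApprox_sub_sub_le (by linarith)
  refine ⟨_, (tendsto_add_atTop_iff_nat 1).1 (hL.congr fun N => ?_)⟩
  rw [logHyperfactorial, Finset.sum_range_succ']
  simp [add_comm]

lemma log_factorial_succ (N : ℕ) :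
    log (N + 1).factorial = log N.factorial + log (N + 1) := by
  rw [Nat.factorial_succ, Nat.cast_mul, log_mul (by positivity) (by positivity), Nat.cast_succ,
    add_comm]

lemma log_two_mul_add_one (n : ℕ) : log (2 * n + 1) = log 2 + log ((n : ℝ) + 1 / 2) := by
  rw [← log_mul two_ne_zero (by positivity)]
  ring_nf

lemma log_two_mul_add_two (n : ℕ) : log (2 * n + 1 + 1) = log 2 + log ((n : ℝ) + 1) := by
  rw [← log_mul two_ne_zero (by positivity)]
  ring_nf

lemma sum_log_add_half (N : ℕ) :
    ∑ n ∈ Finset.range N, log ((n : ℝ) + 1 / 2) =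
      log (2 * N).factorial - log N.factorial - 2 * N * log 2 := by
  induction N with
  | zero => simp
  | succ N ih =>
    rw [Finset.sum_range_succ, ih, Nat.mul_add_one, log_factorial_succ, log_factorial_succ,
      log_factorial_succ]
    push_cast
    rw [log_two_mul_add_one, log_two_mul_add_two]
    ring

lemma sum_mul_log_add_half (N : ℕ) :
    ∑ n ∈ Finset.range N, (2 * (n : ℝ) + 1) * log ((n : ℝ) + 1 / 2) =
      logHyperfactorial (2 * N) - 2 * logHyperfactorial N - N * (2 * N + 1) * log 2 := by
  induction N with
  | zero => simp [logHyperfactorial]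
  | succ N ih =>
    rw [Finset.sum_range_succ, ih, Nat.mul_add_one, logHyperfactorial_succ, logHyperfactorial_succ,
      logHyperfactorial_succ]
    push_cast
    rw [log_two_mul_add_one, log_two_mul_add_two]
    ring

lemma tendsto_two_mul_atTop : Tendsto (fun N : ℕ => 2 * N) atTop atTop :=
  tendsto_id.const_mul_atTop' two_pos

lemma tendsto_log_factorial_two_mul_sub :
    Tendsto (fun N : ℕ => log (2 * N).factorial - log N.factorial -
        (2 * N * log 2 + N * log N - N)) atTop (𝓝 (log 2 / 2)) := by
  have hst := Stirling.tendsto_stirlingSeq_sqrt_pi.log (by positivity)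
  have hlim := ((hst.comp tendsto_two_mul_atTop).sub hst).add_const (log 2 / 2)
  rw [sub_self, zero_add] at hlim
  refine hlim.congr' ?_
  filter_upwards [eventually_gt_atTop 0] with N _
  simp only [Function.comp_apply, Stirling.log_stirlingSeq_formula]
  push_cast
  simp (disch := positivity) only [log_div, log_exp, log_mul]
  ring

/-! ### The Weierstrass product -/

/-- The logarithm of the `n`-th factor of the Weierstrass product of `doubleGamma (x + 1)`. -/
noncomputable def logWeierstrassFactor (x : ℝ) (n : ℕ) : ℝ :=
  ((n : ℝ) + 1) * log (1 + x / (n + 1)) - x + x ^ 2 / (2 * (n + 1))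

lemma summable_logWeierstrassFactor (x : ℝ) : Summable (logWeierstrassFactor x) := by
  have hs : Summable fun n : ℕ => 2 * |x| ^ 3 / ((n : ℝ) + 1) ^ 2 := by
    have h := (summable_nat_add_iff 1).2 (summable_one_div_nat_pow.2 one_lt_two)
    simpa [div_eq_mul_inv] using h.mul_left (2 * |x| ^ 3)
  refine Summable.of_norm_bounded_eventually_nat hs ?_
  filter_upwards [tendsto_natCast_atTop_atTop.eventually_ge_atTop (2 * |x|)] with n hn
  exact abs_mul_log_one_add_div_sub_le (by positivity) (by linarith)

lemma one_add_div_succ_pos {x : ℝ} (hx : -1 < x) (n : ℕ) : 0 < 1 + x / ((n : ℝ) + 1) := by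
  rw [one_add_div (by positivity)]
  exact div_pos (by linarith [n.cast_nonneg (α := ℝ)]) (by positivity)

lemma doubleGamma_add_one_eq_exp {x : ℝ} (hx : -1 < x) :
    doubleGamma (x + 1) = exp (x / 2 * log (2 * π) - (x + x ^ 2) / 2 -
      eulerMascheroniConstant * x ^ 2 / 2 + ∑' n, logWeierstrassFactor x n) := by
  have hlog (n : ℕ) : log ((1 + x / ((n : ℝ) + 1)) ^ (n + 1) *
      exp (-x + x ^ 2 / (2 * (n + 1)))) = logWeierstrassFactor x n := by
    rw [log_mul (pow_pos (one_add_div_succ_pos hx n) _).ne' (exp_pos _).ne', log_exp, log_pow,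
      logWeierstrassFactor]
    push_cast
    ring
  have hprod := rexp_tsum_eq_tprod
    (fun n => mul_pos (pow_pos (one_add_div_succ_pos hx n) (n + 1)) (exp_pos _))
    ((summable_logWeierstrassFactor x).congr fun n => (hlog n).symm)
  simp only [hlog] at hprod
  simp only [doubleGamma, add_sub_cancel_right]
  rw [← hprod, rpow_def_of_pos (by positivity), ← exp_add, ← exp_add]
  ring_nf

lemma doubleGamma_pos {x : ℝ} (hx : 0 < x) : 0 < doubleGamma x := by
  rw [← sub_add_cancel x 1, doubleGamma_add_one_eq_exp (by linarith)]
  exact exp_pos _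

lemma log_doubleGamma_add_one {x : ℝ} (hx : -1 < x) :
    log (doubleGamma (x + 1)) = x / 2 * log (2 * π) - (x + x ^ 2) / 2 -
      eulerMascheroniConstant * x ^ 2 / 2 + ∑' n, logWeierstrassFactor x n := by
  rw [doubleGamma_add_one_eq_exp hx, log_exp]

lemma sum_logWeierstrassFactor {x : ℝ} (hx : -1 < x) (N : ℕ) :
    ∑ n ∈ Finset.range N, logWeierstrassFactor x n =
      ∑ n ∈ Finset.range N, ((n : ℝ) + 1) * log (x + n + 1) - logHyperfactorial N - N * x +
        x ^ 2 / 2 * harmonic N := by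
  have hfactor (n : ℕ) : logWeierstrassFactor x n =
      ((n : ℝ) + 1) * log (x + n + 1) - ((n : ℝ) + 1) * log (n + 1) - x +
        x ^ 2 / 2 * ((n : ℝ) + 1)⁻¹ := by
    rw [logWeierstrassFactor, log_one_add_div (by positivity)
      (by linarith [n.cast_nonneg (α := ℝ)]), ← add_assoc]
    field_simp
  simp [hfactor, Finset.sum_add_distrib, Finset.sum_sub_distrib, ← Finset.mul_sum,
    logHyperfactorial, harmonic]

/-! ### Asymptotics and the value at one half -/

lemma abs_log_doubleGamma_add_one_sub_le {x : ℝ} (hx : 1 ≤ x) :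
    |log (doubleGamma (x + 1)) -
        (x / 2 * log (2 * π) + (x ^ 2 / 2 - 1 / 12) * log x - 3 / 4 * x ^ 2) -
        (1 / 12 - logGlaisher)| ≤ 5 / x := by
  obtain ⟨L, hLle, hL⟩ := exists_tendsto_sum_mul_log_add hx
  have hx0 : x ≠ 0 := by positivity
  have hshift := (tendsto_logHyperfactorialApprox_shift x).comp
    (tendsto_natCast_atTop_atTop (R := ℝ))
  have hlim := ((hL.add hshift).sub tendsto_logHyperfactorial_sub).add
    (tendsto_harmonic_sub_log.const_mul (x ^ 2 / 2))
  have htsum : ∑' n, logWeierstrassFactor x n =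
      L - (logHyperfactorialApprox x - x * logFactorialApprox x) + (x ^ 2 / 2 + x / 2) -
        logGlaisher + x ^ 2 / 2 * eulerMascheroniConstant := by
    refine tendsto_nhds_unique (summable_logWeierstrassFactor x).hasSum.tendsto_sum_nat
      (hlim.congr fun N => ?_)
    rw [sum_logWeierstrassFactor (by linarith), Function.comp_apply]
    ring
  refine (congrArg _ ?_).trans_le hLle
  rw [log_doubleGamma_add_one (by linarith), htsum, logHyperfactorialApprox, logFactorialApprox]
  field_simp
  ring

lemma tendsto_log_doubleGamma_add_one_sub :
    Tendsto (fun x : ℝ => log (doubleGamma (x + 1)) -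
        (x / 2 * log (2 * π) + (x ^ 2 / 2 - 1 / 12) * log x - 3 / 4 * x ^ 2)) atTop
      (𝓝 (1 / 12 - logGlaisher)) := by
  rw [tendsto_iff_norm_sub_tendsto_zero]
  refine squeeze_zero' (Eventually.of_forall fun _ => norm_nonneg _) ?_
    (tendsto_id.const_div_atTop 5)
  filter_upwards [eventually_ge_atTop 1] with x hx
  exact abs_log_doubleGamma_add_one_sub_le hx

lemma sum_logWeierstrassFactor_neg_half (N : ℕ) :
    ∑ n ∈ Finset.range N, logWeierstrassFactor (-(1 / 2)) n =
      1 / 2 * logHyperfactorial (2 * N) - 2 * logHyperfactorial N +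
        1 / 2 * (log (2 * N).factorial - log N.factorial) - N * (2 * N + 3) / 2 * log 2 +
        N / 2 + 1 / 8 * harmonic N := by
  have hsplit (n : ℕ) : ((n : ℝ) + 1) * log (-(1 / 2) + n + 1) =
      1 / 2 * ((2 * (n : ℝ) + 1) * log (n + 1 / 2)) + 1 / 2 * log (n + 1 / 2) := by
    rw [show -(1 / 2) + (n : ℝ) + 1 = n + 1 / 2 by ring]
    ring
  simp only [sum_logWeierstrassFactor (show (-1 : ℝ) < -(1 / 2) by norm_num), hsplit,
    Finset.sum_add_distrib, ← Finset.mul_sum, sum_log_add_half, sum_mul_log_add_half]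
  ring

lemma tsum_logWeierstrassFactor_neg_half :
    ∑' n, logWeierstrassFactor (-(1 / 2)) n =
      7 / 24 * log 2 + 1 / 8 * eulerMascheroniConstant - 3 / 2 * logGlaisher := by
  have hlim := ((((tendsto_logHyperfactorial_sub.comp tendsto_two_mul_atTop).const_mul (1 / 2)).sub
    (tendsto_logHyperfactorial_sub.const_mul 2)).add
    (tendsto_log_factorial_two_mul_sub.const_mul (1 / 2))).add
    ((tendsto_harmonic_sub_log.const_mul (1 / 8)).add_const (log 2 / 24))
  refine tendsto_nhds_unique (summable_logWeierstrassFactor _).hasSum.tendsto_sum_nat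
    ((hlim.congr' ?_).trans_eq (by ring_nf))
  filter_upwards [eventually_ge_atTop 1] with N hN
  have hN0 : (N : ℝ) ≠ 0 := by positivity
  rw [sum_logWeierstrassFactor_neg_half]
  simp only [Function.comp_apply, logHyperfactorialApprox]
  push_cast
  rw [log_mul two_ne_zero hN0]
  ring

lemma log_doubleGamma_half :
    log (doubleGamma (1 / 2)) = log 2 / 24 - log π / 4 + 1 / 8 - 3 / 2 * logGlaisher := by
  rw [show (1 : ℝ) / 2 = -(1 / 2) + 1 by norm_num, log_doubleGamma_add_one (by norm_num),
    tsum_logWeierstrassFactor_neg_half, log_mul two_ne_zero pi_ne_zero]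
  ring

theorem doubleGamma_stirling :
    Tendsto
      (fun x : ℝ =>
        Real.log (doubleGamma (x + 1)) -
          (x / 2 * Real.log (2 * π) + (x ^ 2 / 2 - 1 / 12) * Real.log x -
            3 / 4 * x ^ 2))
      atTop
      (𝓝 (Real.log (π ^ ((1 : ℝ) / 6) * doubleGamma (1 / 2) ^ ((2 : ℝ) / 3) /
        2 ^ ((1 : ℝ) / 36)))) := by
  have hG : 0 < doubleGamma (1 / 2) := doubleGamma_pos one_half_pos
  convert tendsto_log_doubleGamma_add_one_sub using 2
  rw [log_div (by positivity) (by positivity), log_mul (by positivity) (by positivity),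
    log_rpow pi_pos, log_rpow hG, log_rpow two_pos, log_doubleGamma_half]
  ring
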